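/- Let M be an even lattice and let L = U ⊕ ⟨−8⟩ ⊕ M, i.e. L = ℤe ⊕ ℤf ⊕ ℤv ⊕ M with (e,e) = (f,f) = 0, (e,f) = 1, (v,v) = −8, and e, f, v all orthogonal to M. Let Γ = {γ ∈ O(L) : γ(v/8) − v/8 ∈ L, and either γu − u ∈ L for all u ∈ M^∨ or γu + u ∈ L for all u ∈ M^∨}. Set l = 2e + 2f + v and m = e/2 − f/2. Then l is a primitive isotropic vector of L with (m,l) = 0, the isometry −E_{m,l} belongs to Γ, and −id ∉ Γ. Hence ℤl is an irregular 0-dimensional cusp for Γ. -/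

import Mathlib

/-!
With `l = 2e + 2f + v` and `m = (e - f)/2` one has `(m,m) = -1/2`, and `-E_{m,l}` is computed on
the generators of `L`:
`e ↦ -4e - f - v`, `f ↦ -e`, `v ↦ v + 8e`, and `x ↦ -x` for `x ⊥ e, f, v`.
Its inverse `-E_{-m,l}` acts by `e ↦ -f`, `f ↦ -e - 4f - v`, `v ↦ v + 8f`, `x ↦ -x`. So both
preserve `L`; moreover `-E_{m,l}` fixes the class of `v/8` (it moves `v/8` by `e`) and acts
as `-1` on `M^∨`. Eichler transvections are isometries, with inverse `E_{-m,l}`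
(`eichler_isometry`, `eichler_comp_neg`).

Primitivity of `l` and `-id ∉ Γ` both come from the coefficient of `v`: every `u ∈ L` satisfies
`(v,u) ∈ 8ℤ` (`exists_coord`). Since `(v,l) = -8`, an equation `l = k u` forces `k ∣ 1`; and
`-v/8 - v/8 = -v/4` pairs with `v` to `2`, so it is not in `L`.
-/

noncomputable section

open LinearMap (BilinForm)

variable {V : Type*} [AddCommGroup V] [Module ℚ V]

/-- The Eichler transvection `E_{m,l}` as a linear endomorphism of `V`:
`E_{m,l}(v) = v - (m,v)•l + (l,v)•m - (1/2)(m,m)(l,v)•l`. -/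
def eichler (B : BilinForm ℚ V) (m l : V) : V →ₗ[ℚ] V where
  toFun u := u - B m u • l + B l u • m - ((1 / 2 : ℚ) * B m m * B l u) • l
  map_add' x y := by
    simp only [map_add, LinearMap.add_apply]
    module
  map_smul' a x := by
    simp only [map_smul, LinearMap.smul_apply, smul_eq_mul, RingHom.id_apply]
    module

/-- `l` is a primitive vector of the lattice `L`. -/
def IsPrimitiveIn (L : Submodule ℤ V) (l : V) : Prop :=
  l ∈ L ∧ ∀ (k : ℤ) (u : V), u ∈ L → l = k • u → k = 1 ∨ k = -1

/-- `I = ℤl` is an irregular 0-dimensional cusp for the group of isometries `S`: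
`-id ∉ S` and `-E_{m,l} ∈ S` for some `m ⊥ l`. -/
def IsIrregular (B : BilinForm ℚ V) (S : Set (V ≃ₗ[ℚ] V)) (l : V) : Prop :=
  LinearEquiv.neg ℚ ∉ S ∧
    ∃ m : V, B m l = 0 ∧ ∃ γ ∈ S, (γ : V →ₗ[ℚ] V) = -(eichler B m l)

theorem eichler_apply (B : BilinForm ℚ V) (m l u : V) :
    eichler B m l u = u - B m u • l + B l u • m - ((1 / 2 : ℚ) * B m m * B l u) • l := rfl

theorem eichler_comp_neg (B : BilinForm ℚ V) (hsymm : ∀ x y : V, B x y = B y x) (m l : V)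
    (hll : B l l = 0) (hml : B m l = 0) (u : V) :
    eichler B m l (eichler B (-m) l u) = u := by
  have hlm : B l m = 0 := by rw [hsymm, hml]
  simp only [eichler_apply, map_add, map_sub, map_neg, map_smul, LinearMap.neg_apply, hll, hml,
    hlm, smul_eq_mul, smul_neg, neg_smul]
  module

theorem eichler_isometry (B : BilinForm ℚ V) (hsymm : ∀ x y : V, B x y = B y x) (m l : V)
    (hll : B l l = 0) (hml : B m l = 0) (x y : V) :
    B (eichler B m l x) (eichler B m l y) = B x y := by
  have hlm : B l m = 0 := by rw [hsymm, hml]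
  simp only [eichler_apply, map_add, map_sub, map_smul, LinearMap.add_apply, LinearMap.sub_apply,
    LinearMap.smul_apply, hll, hml, hlm, smul_eq_mul, hsymm x l, hsymm x m]
  ring

/-- The isometry `-E_{m,l}` as a linear automorphism, with inverse `-E_{-m,l}`. -/
def negEichler (B : BilinForm ℚ V) (hsymm : ∀ x y : V, B x y = B y x) (m l : V)
    (hll : B l l = 0) (hml : B m l = 0) : V ≃ₗ[ℚ] V :=
  LinearEquiv.ofLinearMap (-(eichler B m l)) (-(eichler B (-m) l))
    (by
      ext u
      simp [eichler_comp_neg B hsymm m l hll hml u])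
    (by
      ext u
      have h := eichler_comp_neg B hsymm (-m) l hll (by simp [hml]) u
      rw [neg_neg] at h
      simp [h])

/-- Coordinates of an element of `ℤe + ℤf + ℤv + M`. -/
theorem exists_coord {M : Submodule ℤ V} {e f v u : V}
    (hu : u ∈ Submodule.span ℤ ({e, f, v} : Set V) ⊔ M) :
    ∃ a b c : ℤ, ∃ x ∈ M, u = (a : ℚ) • e + (b : ℚ) • f + (c : ℚ) • v + x := by
  obtain ⟨y, hy, x, hx, rfl⟩ := Submodule.mem_sup.1 hu
  obtain ⟨a, b, c, rfl⟩ := Submodule.mem_span_triple.1 hy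
  exact ⟨a, b, c, x, hx, by simp only [Int.cast_smul_eq_zsmul]⟩

theorem mem_of_coord {M : Submodule ℤ V} {e f v x : V} (a b c : ℤ) (hx : x ∈ M) :
    (a : ℚ) • e + (b : ℚ) • f + (c : ℚ) • v + x ∈
      Submodule.span ℤ ({e, f, v} : Set V) ⊔ M := by
  refine Submodule.mem_sup.2 ⟨_, Submodule.mem_span_triple.2 ⟨a, b, c, rfl⟩, x, hx, ?_⟩
  simp only [Int.cast_smul_eq_zsmul]

/-- for `L = U ⊕ ⟨-8⟩ ⊕ M` and the group `Γ` acting by `±id` on `A_M`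
and trivially on `A_{⟨-8⟩}`, the vectors `l = 2e + 2f + v` and `m = e/2 - f/2` give an
irregular 0-dimensional cusp `ℤl` for `Γ`: `l` is primitive isotropic, `(m,l) = 0`,
`-E_{m,l} ∈ Γ`, and `-id ∉ Γ`. -/
theorem statement14 (B : BilinForm ℚ V) [FiniteDimensional ℚ V]
    (hsymm : ∀ x y : V, B x y = B y x)
    (hnd : LinearMap.BilinForm.Nondegenerate B)
    (M : Submodule ℤ V)
    (hintM : ∀ x ∈ M, ∀ y ∈ M, ∃ n : ℤ, B x y = (n : ℚ))
    (hevenM : ∀ x ∈ M, ∃ n : ℤ, B x x = 2 * (n : ℚ))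
    (hMfg : M.FG)
    (e f v : V)
    (hee : B e e = 0) (hff : B f f = 0) (hef : B e f = 1)
    (hvv : B v v = -8) (hev : B e v = 0) (hfv : B f v = 0)
    (horth : ∀ x ∈ M, B e x = 0 ∧ B f x = 0 ∧ B v x = 0)
    (L : Submodule ℤ V)
    (hL : L = Submodule.span ℤ ({e, f, v} : Set V) ⊔ M)
    (hspan : Submodule.span ℚ (L : Set V) = ⊤)
    (Γ : Set (V ≃ₗ[ℚ] V))
    (hΓ : Γ = {γ : V ≃ₗ[ℚ] V |
      (∀ x y : V, B (γ x) (γ y) = B x y) ∧ (∀ x ∈ L, γ x ∈ L) ∧ (∀ x ∈ L, γ⁻¹ x ∈ L) ∧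
      γ ((8 : ℚ)⁻¹ • v) - (8 : ℚ)⁻¹ • v ∈ L ∧
      ((∀ u : V, u ∈ Submodule.span ℚ (M : Set V) →
          (∀ x ∈ M, ∃ n : ℤ, B u x = (n : ℚ)) → γ u - u ∈ L) ∨
        (∀ u : V, u ∈ Submodule.span ℚ (M : Set V) →
          (∀ x ∈ M, ∃ n : ℤ, B u x = (n : ℚ)) → γ u + u ∈ L))}) :
    IsPrimitiveIn L ((2 : ℚ) • e + (2 : ℚ) • f + v) ∧
    B ((2 : ℚ) • e + (2 : ℚ) • f + v) ((2 : ℚ) • e + (2 : ℚ) • f + v) = 0 ∧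
    B ((2 : ℚ)⁻¹ • e - (2 : ℚ)⁻¹ • f) ((2 : ℚ) • e + (2 : ℚ) • f + v) = 0 ∧
    (∃ γ ∈ Γ, (γ : V →ₗ[ℚ] V) =
      -(eichler B ((2 : ℚ)⁻¹ • e - (2 : ℚ)⁻¹ • f) ((2 : ℚ) • e + (2 : ℚ) • f + v))) ∧
    LinearEquiv.neg ℚ ∉ Γ ∧
    IsIrregular B Γ ((2 : ℚ) • e + (2 : ℚ) • f + v) := by
  have hfe : B f e = 1 := by rw [hsymm, hef]
  have hve : B v e = 0 := by rw [hsymm, hev]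
  have hvf : B v f = 0 := by rw [hsymm, hfv]
  subst hL
  set l : V := (2 : ℚ) • e + (2 : ℚ) • f + v with hl
  set m : V := (2 : ℚ)⁻¹ • e - (2 : ℚ)⁻¹ • f with hm
  have hll : B l l = 0 := by
    simp only [hl, map_add, map_smul, LinearMap.add_apply, LinearMap.smul_apply, smul_eq_mul,
      hee, hff, hef, hfe, hvv, hev, hve, hfv, hvf]
    norm_num
  have hml : B m l = 0 := by
    simp only [hl, hm, map_add, map_sub, map_smul, LinearMap.sub_apply, LinearMap.smul_apply,
      smul_eq_mul, hee, hff, hef, hfe, hev, hfv]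
    norm_num
  have hmm : B m m = -1 / 2 := by
    simp only [hm, map_sub, map_smul, LinearMap.sub_apply, LinearMap.smul_apply,
      smul_eq_mul, hee, hff, hef, hfe]
    norm_num
  have hB_m : ∀ u, B m u = (2 : ℚ)⁻¹ * B e u - (2 : ℚ)⁻¹ * B f u := fun u => by
    simp [hm]
  have hB_l : ∀ u, B l u = 2 * B e u + 2 * B f u + B v u := fun u => by
    simp [hl]
  -- A vector of `L` pairs with `v` to `-8` times its `v`-coordinate.
  have hvcoord : ∀ u ∈ Submodule.span ℤ ({e, f, v} : Set V) ⊔ M,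
      ∃ c : ℤ, B v u = -8 * (c : ℚ) := by
    intro u hu
    obtain ⟨a, b, c, x, hx, rfl⟩ := exists_coord hu
    refine ⟨c, ?_⟩
    simp only [map_add, map_smul, smul_eq_mul, hve, hvf, hvv, (horth x hx).2.2]
    ring
  have hprim : IsPrimitiveIn (Submodule.span ℤ ({e, f, v} : Set V) ⊔ M) l := by
    refine ⟨?_, ?_⟩
    · have h := mem_of_coord (e := e) (f := f) (v := v) 2 2 1 M.zero_mem
      convert h using 1
      rw [hl]
      push_cast
      module
    · intro k u hu hk
      obtain ⟨c, hc⟩ := hvcoord u hu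
      have h1 : B v l = -8 := by
        simp [hl, hve, hvf, hvv]
      rw [hk, ← Int.cast_smul_eq_zsmul ℚ, map_smul, hc, smul_eq_mul] at h1
      have h2 : k * c = 1 := by
        have : (k : ℚ) * c = 1 := by linarith
        exact_mod_cast this
      exact Int.isUnit_iff.1 (IsUnit.of_mul_eq_one c h2)
  have hneg : LinearEquiv.neg ℚ ∉ Γ := by
    rw [hΓ]
    rintro ⟨-, -, -, h, -⟩
    obtain ⟨c, hc⟩ := hvcoord _ h
    simp only [LinearEquiv.neg_apply, map_sub, map_neg, map_smul, smul_eq_mul, hvv] at hc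
    have h4 : (4 * c : ℚ) = -1 := by linarith
    have h5 : 4 * c = -1 := by exact_mod_cast h4
    omega
  have hex : ∃ γ ∈ Γ, (γ : V →ₗ[ℚ] V) = -(eichler B m l) := by
    refine ⟨negEichler B hsymm m l hll hml, ?_, rfl⟩
    have happ : ∀ u, negEichler B hsymm m l hll hml u = -(eichler B m l u) := fun _ => rfl
    have hinv : ∀ u, (negEichler B hsymm m l hll hml)⁻¹ u = -(eichler B (-m) l u) :=
      fun _ => rfl
    rw [hΓ]
    refine ⟨?_, ?_, ?_, ?_, Or.inr ?_⟩
    · intro x y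
      rw [happ, happ, map_neg, map_neg, LinearMap.neg_apply, neg_neg,
        eichler_isometry B hsymm m l hll hml]
    · intro u hu
      obtain ⟨a, b, c, x, hx, rfl⟩ := exists_coord hu
      obtain ⟨h1, h2, h3⟩ := horth x hx
      convert mem_of_coord (e := e) (f := f) (v := v) (-4 * a - b + 8 * c) (-a) (-a + c)
        (M.neg_mem hx) using 1
      simp only [happ, eichler_apply, hmm, hB_m, hB_l, map_add, map_smul, smul_eq_mul,
        hee, hff, hef, hfe, hvv, hev, hve, hfv, hvf, h1, h2, h3]
      rw [hl, hm]
      push_cast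
      module
    · intro u hu
      obtain ⟨a, b, c, x, hx, rfl⟩ := exists_coord hu
      obtain ⟨h1, h2, h3⟩ := horth x hx
      convert mem_of_coord (e := e) (f := f) (v := v) (-b) (-a - 4 * b + 8 * c) (-b + c)
        (M.neg_mem hx) using 1
      simp only [hinv, eichler_apply, map_neg, LinearMap.neg_apply, neg_neg, hmm, hB_m, hB_l,
        map_add, map_smul, smul_eq_mul,
        hee, hff, hef, hfe, hvv, hev, hve, hfv, hvf, h1, h2, h3]
      rw [hl, hm]
      push_cast
      module
    · convert mem_of_coord (e := e) (f := f) (v := v) 1 0 0 M.zero_mem using 1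
      simp only [happ, eichler_apply, hmm, hB_m, hB_l, map_smul, smul_eq_mul,
        hvv, hev, hfv]
      rw [hl, hm]
      push_cast
      module
    · intro u hu _
      -- Orthogonality to `e`, `f`, `v` extends from `M` to its rational span.
      have hperp : ∀ w : V, (∀ x ∈ M, B w x = 0) → B w u = 0 := fun w hw => by
        have hle : Submodule.span ℚ (M : Set V) ≤ LinearMap.ker (B w) :=
          Submodule.span_le.2 fun x hx => LinearMap.mem_ker.2 (hw x hx)
        exact LinearMap.mem_ker.1 (hle hu)
      have h1 := hperp e fun x hx => (horth x hx).1
      have h2 := hperp f fun x hx => (horth x hx).2.1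
      have h3 := hperp v fun x hx => (horth x hx).2.2
      have h0 : negEichler B hsymm m l hll hml u + u = 0 := by
        simp only [happ, eichler_apply, hB_m, hB_l, h1, h2, h3]
        module
      rw [h0]
      exact Submodule.zero_mem _
  exact ⟨hprim, hll, hml, hex, hneg, hneg, m, hml, hex⟩
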